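/- Let d ≥ 1, R > 0, b > 0, q > 0, let γ ∈ ℝᵈ, let σ = (σ_{ij}) be a symmetric positive semidefinite d×d real matrix, and let ν be a finite Borel measure on ℝᵈ with ν({0}) = 0 and ∫_{ℝᵈ} |z| dν(z) < ∞. Let W : ℝᵈ → ℝ be continuous with support contained in the closed ball B̄_{R+b/2}(0), and twice continuously differentiable on the open ball B_R(0). Assume that for every x ∈ B_R(0): q·W(x) − (1/2)·∑_{i,j} σ_{ij} ∂²_{ij}W(x) − ⟨∇W(x), γ⟩ − ∫_{ℝᵈ} ( W(x+z) − W(x) − ⟨∇W(x), z⟩ ) dν(z) ≤ 0. Then sup_{x ∈ ℝᵈ} W(x) = sup_{x : R ≤ |x| < R+b/2} max(W(x), 0). -/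

import Mathlib

open MeasureTheory Metric
open scoped RealInnerProductSpace

/-- The second derivative test, in its necessary form: at a local maximum the second derivative
of a function of one variable is nonpositive. -/
theorem IsLocalMax.deriv_deriv_nonpos {g : ℝ → ℝ} {t : ℝ} (h : IsLocalMax g t)
    (hc : ContinuousAt g t) : deriv (deriv g) t ≤ 0 := by
  by_contra! hpos
  have hmin : IsLocalMin g t := isLocalMin_of_deriv_deriv_pos hpos h.deriv_eq_zero hc
  have hconst : g =ᶠ[nhds t] fun _ => g t := by
    filter_upwards [h, hmin] with s hs hs' using le_antisymm hs hs'
  have hzero : deriv (deriv g) t = 0 := by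
    rw [hconst.deriv.deriv_eq]
    simp
  exact hpos.ne' hzero

/-- The Hessian of a `C²` function is negative semidefinite at a local maximum. -/
theorem IsLocalMax.fderiv_fderiv_apply_self_nonpos {E : Type*} [NormedAddCommGroup E]
    [NormedSpace ℝ E] {f : E → ℝ} {x : E} (h : IsLocalMax f x) (hf : ContDiffAt ℝ 2 f x) (v : E) :
    fderiv ℝ (fderiv ℝ f) x v v ≤ 0 := by
  have hline (t : ℝ) : HasDerivAt (fun s : ℝ => x + s • v) v t := by
    simpa using ((hasDerivAt_id t).smul_const v).const_add x
  have hx : x + (0 : ℝ) • v = x := by simp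
  have hcont : Filter.Tendsto (fun s : ℝ => x + s • v) (nhds 0) (nhds x) := by
    simpa using (hline 0).continuousAt.tendsto
  have hdiff : ∀ᶠ y in nhds x, DifferentiableAt ℝ f y := by
    filter_upwards [hf.eventually (by simp)] with y hy using hy.differentiableAt (by simp)
  have hderiv : deriv (fun s : ℝ => f (x + s • v)) =ᶠ[nhds 0]
      fun s => fderiv ℝ f (x + s • v) v := by
    filter_upwards [hcont.eventually hdiff] with s hs
    exact (hs.hasFDerivAt.comp_hasDerivAt s (hline s)).deriv
  have hsecond : HasFDerivAt (fderiv ℝ f) (fderiv ℝ (fderiv ℝ f) x) (x + (0 : ℝ) • v) := by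
    rw [hx]
    exact ((hf.fderiv_right (m := 1) (by norm_num)).differentiableAt (by simp)).hasFDerivAt
  have hcomp : HasDerivAt (fun s : ℝ => fderiv ℝ f (x + s • v)) (fderiv ℝ (fderiv ℝ f) x v) 0 :=
    hsecond.comp_hasDerivAt (0 : ℝ) (hline 0)
  have hsecond' : HasDerivAt (fun s : ℝ => fderiv ℝ f (x + s • v) v)
      (fderiv ℝ (fderiv ℝ f) x v v) 0 := by
    simpa using hcomp.clm_apply (hasDerivAt_const 0 v)
  rw [← hsecond'.deriv, ← hderiv.deriv_eq]
  refine IsLocalMax.deriv_deriv_nonpos ?_ ?_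
  · simpa [IsLocalMax, IsMaxFilter] using hcont.eventually h
  · exact ContinuousAt.comp (f := fun s : ℝ => x + s • v) (by rw [hx]; exact hf.continuousAt)
      (hline 0).continuousAt

/-- The contraction of a positive semidefinite matrix with a bilinear form whose quadratic form is
nonpositive is nonpositive. -/
theorem Matrix.PosSemidef.sum_mul_bilin_nonpos {ι E : Type*} [Fintype ι]
    [AddCommGroup E] [Module ℝ E] {σ : Matrix ι ι ℝ} (hσ : σ.PosSemidef)
    (B : E →ₗ[ℝ] E →ₗ[ℝ] ℝ) (hB : ∀ v, B v v ≤ 0) (e : ι → E) :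
    ∑ i, ∑ j, σ i j * B (e i) (e j) ≤ 0 := by
  classical
  open scoped MatrixOrder Matrix.Norms.L2Operator in
  obtain ⟨A, rfl⟩ := CStarAlgebra.nonneg_iff_eq_star_mul_self.mp hσ.nonneg
  have hsum : ∑ i, ∑ j, (star A * A) i j * B (e i) (e j) =
      ∑ k, B (∑ i, A k i • e i) (∑ j, A k j • e j) := by
    simp only [Matrix.mul_apply, Matrix.star_apply, star_trivial, map_sum, map_smul,
      LinearMap.sum_apply, LinearMap.smul_apply, smul_eq_mul, Finset.sum_mul, Finset.mul_sum]
    rw [Finset.sum_congr rfl fun _ _ => Finset.sum_comm, Finset.sum_comm]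
    refine Finset.sum_congr rfl fun k _ => ?_
    rw [Finset.sum_comm]
    exact Finset.sum_congr rfl fun j _ => Finset.sum_congr rfl fun i _ => by ring
  rw [hsum]
  exact Finset.sum_nonpos fun k _ => hB _

/-- A continuous function supported in a closed ball vanishes outside the open ball. -/
theorem Continuous.eq_zero_of_support_subset_closedBall {E : Type*} [NormedAddCommGroup E]
    [NormedSpace ℝ E] {f : E → ℝ} (hf : Continuous f) {r : ℝ} (hr : r ≠ 0)
    (hsupp : Function.support f ⊆ closedBall 0 r) {x : E} (hx : r ≤ ‖x‖) : f x = 0 := by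
  by_contra hne
  have hmem : x ∈ interior (closedBall (0 : E) r) :=
    interior_maximal hsupp hf.isOpen_support hne
  rw [interior_closedBall _ hr, mem_ball_zero_iff] at hmem
  exact hmem.not_ge hx

/-- Weak maximum principle for the elliptic integro-differential operator
`q − L − I'`, where `L W = (1/2)tr(σD²W) + ⟨∇W, γ⟩` and
`I' W(x) = ∫ (W(x+z) − W(x) − ⟨∇W(x), z⟩) dν(z)`. -/
theorem weak_maximum_principle_integro_differential
    (d : ℕ) (hd : 1 ≤ d) (R b q : ℝ) (hR : 0 < R) (hb : 0 < b) (hq : 0 < q)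
    (γ : EuclideanSpace ℝ (Fin d)) (σ : Matrix (Fin d) (Fin d) ℝ) (hσ : σ.PosSemidef)
    (ν : Measure (EuclideanSpace ℝ (Fin d))) [IsFiniteMeasure ν]
    (hν0 : ν {0} = 0) (hν1 : Integrable (fun z => ‖z‖) ν)
    (W : EuclideanSpace ℝ (Fin d) → ℝ) (hWc : Continuous W)
    (hWsupp : Function.support W ⊆ closedBall 0 (R + b / 2))
    (hWd : ContDiffOn ℝ 2 W (ball 0 R))
    (hsub : ∀ x ∈ ball (0 : EuclideanSpace ℝ (Fin d)) R,
      q * W x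
        - (1 / 2) * ∑ i, ∑ j, σ i j *
            fderiv ℝ (fun y => fderiv ℝ W y (EuclideanSpace.single j 1)) x
              (EuclideanSpace.single i 1)
        - ⟪gradient W x, γ⟫
        - ∫ z, (W (x + z) - W x - ⟪gradient W x, z⟫) ∂ν ≤ 0) :
    sSup (Set.range W) =
      sSup ((fun x => max (W x) 0) ''
        {x : EuclideanSpace ℝ (Fin d) | R ≤ ‖x‖ ∧ ‖x‖ < R + b / 2}) := by
  have hr : 0 < R + b / 2 := by positivity
  have hzero : ∀ x, R + b / 2 ≤ ‖x‖ → W x = 0 := fun x hx =>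
    hWc.eq_zero_of_support_subset_closedBall hr.ne' hWsupp hx
  have hcs : HasCompactSupport W :=
    HasCompactSupport.of_support_subset_isCompact (isCompact_closedBall 0 _) hWsupp
  obtain ⟨x₀, hx₀⟩ := hWc.exists_forall_ge_of_hasCompactSupport hcs
  have hnorm (r : ℝ) (hr : 0 ≤ r) : ‖EuclideanSpace.single (⟨0, hd⟩ : Fin d) r‖ = r := by
    rw [PiLp.norm_single, Real.norm_of_nonneg hr]
  have hmax_nonneg : 0 ≤ W x₀ := by
    rw [← hzero _ (hnorm _ hr.le).ge]
    exact hx₀ _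
  have hleft : sSup (Set.range W) = W x₀ :=
    IsGreatest.csSup_eq ⟨Set.mem_range_self x₀, Set.forall_mem_range.mpr hx₀⟩
  have hupper : W x₀ ∈ upperBounds ((fun x => max (W x) 0) ''
      {x : EuclideanSpace ℝ (Fin d) | R ≤ ‖x‖ ∧ ‖x‖ < R + b / 2}) := by
    rintro _ ⟨x, -, rfl⟩
    exact max_le (hx₀ x) hmax_nonneg
  have hannulus : EuclideanSpace.single (⟨0, hd⟩ : Fin d) R ∈
      {x : EuclideanSpace ℝ (Fin d) | R ≤ ‖x‖ ∧ ‖x‖ < R + b / 2} := by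
    rw [Set.mem_ofPred_eq, hnorm R hR.le]
    exact ⟨le_rfl, by linarith⟩
  rw [hleft]
  refine le_antisymm ?_ (csSup_le ⟨_, Set.mem_image_of_mem _ hannulus⟩ hupper)
  rcases hmax_nonneg.eq_or_lt with hM | hM
  · rw [← hM]
    exact (le_max_right _ _).trans (le_csSup ⟨_, hupper⟩ (Set.mem_image_of_mem _ hannulus))
  have hlt : ‖x₀‖ < R + b / 2 := by
    by_contra! hge
    exact hM.ne' (hzero x₀ hge)
  have hge : R ≤ ‖x₀‖ := by
    by_contra! hin
    have hball : x₀ ∈ ball (0 : EuclideanSpace ℝ (Fin d)) R := mem_ball_zero_iff.mpr hin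
    have hC2 : ContDiffAt ℝ 2 W x₀ := hWd.contDiffAt (isOpen_ball.mem_nhds hball)
    have hloc : IsLocalMax W x₀ := Filter.Eventually.of_forall hx₀
    have hgrad : gradient W x₀ = 0 := by
      simp [gradient, hloc.fderiv_eq_zero]
    have hdiff : DifferentiableAt ℝ (fderiv ℝ W) x₀ :=
      (hC2.fderiv_right (m := 1) (by norm_num)).differentiableAt (by simp)
    have hpartial (u v : EuclideanSpace ℝ (Fin d)) :
        fderiv ℝ (fun y => fderiv ℝ W y v) x₀ u = fderiv ℝ (fderiv ℝ W) x₀ u v := by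
      rw [fderiv_clm_apply hdiff (differentiableAt_const v)]
      simp
    have htrace : ∑ i, ∑ j, σ i j * fderiv ℝ (fderiv ℝ W) x₀ (EuclideanSpace.single i 1)
        (EuclideanSpace.single j 1) ≤ 0 :=
      hσ.sum_mul_bilin_nonpos (fderiv ℝ (fderiv ℝ W) x₀).toLinearMap₁₂
        (hloc.fderiv_fderiv_apply_self_nonpos hC2) fun i => EuclideanSpace.single i 1
    have hint : ∫ z, (W (x₀ + z) - W x₀) ∂ν ≤ 0 :=
      integral_nonpos fun z => sub_nonpos.mpr (hx₀ _)
    have hineq := hsub x₀ hball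
    simp only [hpartial, hgrad, inner_zero_left, sub_zero] at hineq
    nlinarith [mul_pos hq hM]
  exact (le_max_left _ _).trans (le_csSup ⟨_, hupper⟩ (Set.mem_image_of_mem _ ⟨hge, hlt⟩))
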